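/- arXiv:1612.03351 — 2 statements merged into one kernel-verified Lean document; each statement's English description precedes it below -/
import Mathlib

section
/- Let b be a positive even integer and x ∈ (1/b)ℤ. Then the function τ ↦ g⁺_τ(x) is holomorphic on H, there exist integers a_n (for n ∈ ℤ, bounded below) such that b · e(x²τ/2) · g⁺_τ(x) = ∑_n a_n e(nτ/(8b²)) for all τ ∈ H, and a_n = 0 whenever n/(8b²) < |x|/b + 1/(2b²) − 1/8; in particular g⁺_τ(x) = O(e^{−2πv(|x|/b + 1/(2b²) − 1/8)}) as v → ∞. -/
open Complex MeasureTheory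
open scoped Classical

noncomputable section

/-- `e(a) = exp(2πia)`. -/
def e (a : ℂ) : ℂ := Complex.exp (2 * (Real.pi : ℂ) * Complex.I * a)

/-- The Fourier transform `F(g)(x) = ∫ g(w) e(wx) dw`. -/
def fourierT (g : ℝ → ℂ) (x : ℝ) : ℂ := ∫ w : ℝ, g w * e ((w * x : ℝ))

/-- The operator `E_σ(f)(x) = e(x²σ/2) ∫_0^x e(-w²σ/2) f(w) dw`. -/
def Eop (σ : ℂ) (f : ℝ → ℂ) (x : ℝ) : ℂ :=
  e ((x : ℂ)^2 * σ / 2) * ∫ w in (0:ℝ)..x, e (-(w : ℂ)^2 * σ / 2) * f w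

/-- `ω_τ(x) = e(-x²τ/2) ∑_{m ∈ ℤ+1/2, m ≥ |x|} e(m²τ/2 + m/2)`. -/
def omega (τ : ℂ) (x : ℝ) : ℂ :=
  e (-(x : ℂ)^2 * τ / 2) *
    ∑' m : ℤ, if |x| ≤ (m : ℝ) + 1/2 then
      e (((m : ℂ) + 1/2)^2 / 2 * τ + ((m : ℂ) + 1/2) / 2) else 0

/-- `η³(τ) = -i ∑_{m ∈ ℤ+1/2} m e(m²τ/2 + m/2)`. -/
def eta3 (τ : ℂ) : ℂ :=
  -Complex.I * ∑' m : ℤ, ((m : ℂ) + 1/2) * e (((m : ℂ) + 1/2)^2 / 2 * τ + ((m : ℂ) + 1/2) / 2)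

/-- The complementary error function. -/
def erfc (x : ℝ) : ℝ := (2 / Real.sqrt Real.pi) * ∫ t in Set.Ioi x, Real.exp (-t^2)

/-- `g⁺_τ`. -/
def gplus (τ : ℂ) (x : ℝ) : ℂ :=
  e (-(x : ℂ)^2 * τ / 2) * ((Real.sign x : ℂ) / (Complex.I * eta3 τ)) *
    ∑' m : ℤ, if |x| < (m : ℝ) + 1/2 then
      (((m : ℝ) + 1/2 - |x| : ℝ) : ℂ) * e (((m : ℂ) + 1/2)^2 / 2 * τ + ((m : ℂ) + 1/2) / 2)
    else 0

/-- `g*_τ`. -/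
def gstar (τ : ℂ) (x : ℝ) : ℂ :=
  e (-(x : ℂ)^2 * τ / 2) * ((Real.sign x : ℂ) / 2) *
    (erfc (Real.sqrt (2 * Real.pi * τ.im) * |x|) : ℂ)

/-- `g_τ = g⁺_τ - g*_τ`. -/
def gfun (τ : ℂ) (x : ℝ) : ℂ := gplus τ x - gstar τ x

/-- The operator `ξ_k f = 2i v^k conj(∂f/∂τ̄)`, with `∂/∂τ̄ = (1/2)(∂/∂u + i ∂/∂v)`. -/
def xi (k : ℝ) (f : ℂ → ℂ) (τ : ℂ) : ℂ :=
  2 * Complex.I * ((τ.im ^ k : ℝ) : ℂ) *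
    (starRingEnd ℂ) ((1/2 : ℂ) * (fderiv ℝ f τ 1 + Complex.I * fderiv ℝ f τ Complex.I))

/-- Sum of divisors function `σ₁`. -/
def sigma1 (n : ℕ) : ℕ := ∑ d ∈ Nat.divisors n, d

/-- The weight 2 Eisenstein series `E₂`. -/
def E2 (τ : ℂ) : ℂ := 1 - 24 * ∑' n : ℕ, (sigma1 (n+1) : ℂ) * e ((n + 1 : ℂ) * τ)

/-- `ϑ̃_{N,h}`. -/
def tvtheta (N : ℕ) (h : ℝ) (τ : ℂ) : ℂ :=
  (if ∃ m : ℤ, h = (m : ℝ) + 1/2 then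
      e ((h : ℂ) / 2) * E2 τ / (12 * (N : ℂ) * Complex.I * eta3 τ) else 0)
  + ∑' n : ℤ, gfun τ ((N : ℝ) * n + h)

/-- The Schwartz function `φ_τ(x,y) = √(2v)·x·e(x²τ/2 - y²τ̄/2)`. -/
def Phi (τ : ℂ) (x y : ℝ) : ℂ :=
  (Real.sqrt (2 * τ.im) : ℂ) * (x : ℂ) *
    e ((x : ℂ)^2 * τ / 2 - (y : ℂ)^2 * (starRingEnd ℂ) τ / 2)

/-- The signature (1,1) bilinear form `B((a₁,a₂),(b₁,b₂)) = a₁b₂ + a₂b₁`. -/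
def Bform (a b : ℝ × ℝ) : ℝ := a.1 * b.2 + a.2 * b.1

/-- `Z⁺_t = (t/√2, t⁻¹/√2)`. -/
def Zp (t : ℝ) : ℝ × ℝ := (t / Real.sqrt 2, t⁻¹ / Real.sqrt 2)

/-- `Z⁻_t = (t/√2, -t⁻¹/√2)`. -/
def Zm (t : ℝ) : ℝ × ℝ := (t / Real.sqrt 2, -t⁻¹ / Real.sqrt 2)

end

/-!
Put `q = e τ`. Jacobi's identity `∑ (-1) ^ n * (2 * n + 1) * q ^ (n * (n + 1) / 2) = (q; q)_∞ ^ 3`,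
obtained by letting `n → ∞` in the derivative at `z = 1` of the finite triple product, shows that
`η³ = e (τ / 8) * (q; q)_∞ ^ 3`. The theta series in the numerator of `g⁺` carries the same factor
`e (τ / 8)`, so `e (x ^ 2 * τ / 2) * g⁺` is a quotient of two power series in `q`. The denominator
has integral coefficients and constant term `1`, and does not vanish on the unit disc. When `b` is
even and `b * x` is an integer, `b` times the numerator is integral as well, hence so is `b` times
the quotient. The order of vanishing at `q = 0` is that of the numerator: a half-integer
`m > |x|` satisfies `m ≥ |x| + 1 / b`, so every exponent `m ^ 2 / 2 - 1 / 8` that occurs is at least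
`(|x| + 1 / b) ^ 2 / 2 - 1 / 8 = x ^ 2 / 2 + |x| / b + 1 / (2 * b ^ 2) - 1 / 8`.
-/

open Filter Topology Asymptotics

section FiniteTripleProduct

variable {K : Type*} [Field K] {q : K}

/-- The `q`-Pochhammer symbol `(q; q)_n = (1 - q) (1 - q ^ 2) ⋯ (1 - q ^ n)`. -/
def qPochhammer (q : K) (n : ℕ) : K := ∏ i ∈ Finset.range n, (1 - q ^ (i + 1))

/-- The reciprocal `1 / (q; q)_j`, extended by zero to negative indices `j`. -/
def qPochhammerInv (q : K) (j : ℤ) : K := if 0 ≤ j then (qPochhammer q j.toNat)⁻¹ else 0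

/-- The coefficient `(-1) ^ m * q ^ (m * (m + 1) / 2)` of the theta series. -/
def thetaTerm (q : K) (m : ℤ) : K := (-1) ^ m * q ^ (m * (m + 1) / 2)

/-- The coefficient of `z ^ m` in the Laurent polynomial
`(1 - z⁻¹) * ∏ i ∈ Icc 1 n, (1 - q ^ i * z) * (1 - q ^ i * z⁻¹)`, the truncation of the Jacobi
triple product. -/
def tripleProductCoeff (q : K) (n : ℕ) (m : ℤ) : K :=
  thetaTerm q m *
    (qPochhammer q (2 * n + 1) * qPochhammerInv q (n - m) * qPochhammerInv q (n + m + 1))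

lemma qPochhammer_zero (q : K) : qPochhammer q 0 = 1 :=
  Finset.prod_range_zero _

lemma qPochhammer_succ (q : K) (n : ℕ) :
    qPochhammer q (n + 1) = qPochhammer q n * (1 - q ^ (n + 1)) :=
  Finset.prod_range_succ _ _

lemma qPochhammerInv_natCast (q : K) (n : ℕ) : qPochhammerInv q n = (qPochhammer q n)⁻¹ := by
  simp [qPochhammerInv]

lemma qPochhammerInv_of_neg (q : K) {j : ℤ} (hj : j < 0) : qPochhammerInv q j = 0 :=
  if_neg hj.not_ge

lemma qPochhammerInv_sub_one (hq : ∀ n : ℕ, q ^ (n + 1) ≠ 1) (j : ℤ) :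
    qPochhammerInv q (j - 1) = (1 - q ^ j) * qPochhammerInv q j := by
  rcases lt_trichotomy j 0 with hj | rfl | hj
  · rw [qPochhammerInv_of_neg q hj, qPochhammerInv_of_neg q (by lia), mul_zero]
  · simp [qPochhammerInv_of_neg]
  · obtain ⟨n, rfl⟩ : ∃ n : ℕ, j = n + 1 := ⟨(j - 1).toNat, by lia⟩
    have hn : 1 - q ^ (n + 1) ≠ 0 := sub_ne_zero.mpr (hq n).symm
    rw [add_sub_cancel_right, ← Nat.cast_succ, qPochhammerInv_natCast, qPochhammerInv_natCast,
      zpow_natCast, Nat.succ_eq_add_one, qPochhammer_succ, mul_inv, mul_left_comm,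
      mul_inv_cancel₀ hn, mul_one]

lemma thetaTerm_add_one (hq₀ : q ≠ 0) (m : ℤ) :
    thetaTerm q (m + 1) = -q ^ (m + 1) * thetaTerm q m := by
  have hexp : (m + 1) * (m + 1 + 1) / 2 = (m + 1) + m * (m + 1) / 2 := by
    rw [show (m + 1) * (m + 1 + 1) = m * (m + 1) + (m + 1) * 2 by ring,
      Int.add_mul_ediv_right _ _ two_ne_zero, add_comm]
  rw [thetaTerm, thetaTerm, hexp, zpow_add₀ hq₀, zpow_add_one₀ (neg_ne_zero.mpr one_ne_zero)]
  ring

lemma thetaTerm_sub_one (hq₀ : q ≠ 0) (m : ℤ) :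
    thetaTerm q (m - 1) = -(q ^ m)⁻¹ * thetaTerm q m := by
  have h := thetaTerm_add_one hq₀ (m - 1)
  rw [sub_add_cancel] at h
  rw [h, neg_mul, neg_mul, mul_neg, neg_neg, inv_mul_cancel_left₀ (zpow_ne_zero m hq₀)]

lemma thetaTerm_natCast (q : K) (n : ℕ) :
    thetaTerm q n = (-1) ^ n * q ^ (n * (n + 1) / 2) := by
  rw [thetaTerm]
  norm_cast

lemma thetaTerm_neg_add_one (q : K) (m : ℤ) : thetaTerm q (-(m + 1)) = -thetaTerm q m := by
  rw [thetaTerm, thetaTerm, show -(m + 1) * (-(m + 1) + 1) = m * (m + 1) by ring, zpow_neg,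
    ← inv_zpow, inv_neg_one, zpow_add_one₀ (neg_ne_zero.mpr one_ne_zero)]
  ring

lemma tripleProductCoeff_eq_zero (q : K) {n : ℕ} {m : ℤ} (hm : m ∉ Set.Icc (-(n : ℤ) - 1) n) :
    tripleProductCoeff q n m = 0 := by
  rw [Set.mem_Icc, not_and_or, not_le, not_le] at hm
  rcases hm with hm | hm
  · rw [tripleProductCoeff, qPochhammerInv_of_neg q (j := n + m + 1) (by lia), mul_zero, mul_zero]
  · rw [tripleProductCoeff, qPochhammerInv_of_neg q (j := n - m) (by lia), mul_zero, zero_mul,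
      mul_zero]

/-- Passing from `n` to `n + 1` multiplies the Laurent polynomial by
`(1 - q ^ (n + 1) * z) * (1 - q ^ (n + 1) * z⁻¹)`. -/
lemma tripleProductCoeff_succ (hq₀ : q ≠ 0) (hq : ∀ n : ℕ, q ^ (n + 1) ≠ 1) (n : ℕ) (m : ℤ) :
    tripleProductCoeff q (n + 1) m = (1 + (q ^ (n + 1)) ^ 2) * tripleProductCoeff q n m
      - q ^ (n + 1) * (tripleProductCoeff q n (m - 1) + tripleProductCoeff q n (m + 1)) := by
  have hm : q ^ m ≠ 0 := zpow_ne_zero m hq₀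
  have hP : qPochhammer q (2 * (n + 1) + 1) =
      qPochhammer q (2 * n + 1) * (1 - q ^ (2 * n + 2)) * (1 - q ^ (2 * n + 3)) := by
    rw [mul_add_one, add_right_comm, qPochhammer_succ, qPochhammer_succ]
  have hleft : qPochhammerInv q (n - m)
      = (1 - q ^ (n + 1) * (q ^ m)⁻¹) * qPochhammerInv q (n + 1 - m) := by
    convert qPochhammerInv_sub_one hq (n + 1 - m : ℤ) using 2
    · ring
    · rw [zpow_sub₀ hq₀, div_eq_mul_inv]; norm_cast
  have hleft' : qPochhammerInv q (n - (m + 1))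
      = (1 - q ^ n * (q ^ m)⁻¹) * qPochhammerInv q (n - m) := by
    convert qPochhammerInv_sub_one hq (n - m : ℤ) using 2
    · ring
    · rw [zpow_sub₀ hq₀, div_eq_mul_inv]; norm_cast
  have hright : qPochhammerInv q (n + m + 1)
      = (1 - q ^ (n + 2) * q ^ m) * qPochhammerInv q (n + m + 2) := by
    convert qPochhammerInv_sub_one hq (n + m + 2 : ℤ) using 2
    · ring
    · rw [add_right_comm, zpow_add₀ hq₀]; norm_cast
  have hright' : qPochhammerInv q (n + (m - 1) + 1)
      = (1 - q ^ (n + 1) * q ^ m) * qPochhammerInv q (n + m + 1) := by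
    convert qPochhammerInv_sub_one hq (n + m + 1 : ℤ) using 2
    · ring
    · rw [add_right_comm, zpow_add₀ hq₀]; norm_cast
  rw [tripleProductCoeff, tripleProductCoeff, tripleProductCoeff, tripleProductCoeff, hP,
    thetaTerm_add_one hq₀, thetaTerm_sub_one hq₀, zpow_add_one₀ hq₀, Nat.cast_succ,
    show (n + 1 + m + 1 : ℤ) = n + m + 2 by ring, show (n + (m + 1) + 1 : ℤ) = n + m + 2 by ring,
    show (n - (m - 1) : ℤ) = n + 1 - m by ring, hleft', hleft, hright', hright]
  field_simp
  ring

lemma hasFiniteSupport_mul_tripleProductCoeff (q : K) (n : ℕ) (k : ℤ) (f : ℤ → K) :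
    Function.HasFiniteSupport fun m => f m * tripleProductCoeff q n (m + k) :=
  ((Set.finite_Icc (-(n : ℤ) - 1) n).preimage (add_left_injective k).injOn).subset fun _ hm =>
    by_contra fun hm' => right_ne_zero_of_mul hm (tripleProductCoeff_eq_zero q hm')

lemma finsum_add_mul_tripleProductCoeff_zero (hq : q ≠ 1) (c : K) :
    ∑ᶠ m : ℤ, (m + c) * tripleProductCoeff q 0 m = 1 := by
  have hsupp : (Function.support fun m : ℤ => (m + c) * tripleProductCoeff q 0 m)
      ⊆ ({-1, 0} : Finset ℤ) := fun m hm => by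
    have hm' : m ∈ Set.Icc (-((0 : ℕ) : ℤ) - 1) (0 : ℕ) :=
      by_contra fun h => right_ne_zero_of_mul hm (tripleProductCoeff_eq_zero q h)
    rw [Finset.mem_coe, Finset.mem_insert, Finset.mem_singleton]
    rw [Set.mem_Icc] at hm'
    lia
  have hq' : 1 - q ≠ 0 := sub_ne_zero.mpr hq.symm
  rw [finsum_eq_sum_of_support_subset _ hsupp, Finset.sum_pair (by decide)]
  simp [tripleProductCoeff, thetaTerm, qPochhammerInv, qPochhammer, hq']

-- The finite product vanishes at `z = 1`, so `c` drops out; the left side is its derivative there.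
lemma finsum_add_mul_tripleProductCoeff (hq₀ : q ≠ 0) (hq : ∀ n : ℕ, q ^ (n + 1) ≠ 1) (n : ℕ)
    (c : K) : ∑ᶠ m : ℤ, (m + c) * tripleProductCoeff q n m = qPochhammer q n ^ 2 := by
  induction n generalizing c with
  | zero => rw [finsum_add_mul_tripleProductCoeff_zero (by simpa using hq 0),
      qPochhammer_zero, one_pow]
  | succ n ih =>
    have hshift (k : ℤ) : ∑ᶠ m : ℤ, (m + c) * tripleProductCoeff q n (m + k)
        = qPochhammer q n ^ 2 := by
      rw [← ih (c - k), ← finsum_comp_equiv (Equiv.addRight k)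
        (f := fun m : ℤ => (m + (c - k)) * tripleProductCoeff q n m)]
      simp only [Equiv.coe_addRight, Int.cast_add, add_add_sub_cancel]
    have hfin (k : ℤ) := hasFiniteSupport_mul_tripleProductCoeff q n k fun m => (m : K) + c
    calc ∑ᶠ m : ℤ, (m + c) * tripleProductCoeff q (n + 1) m
        = ∑ᶠ m : ℤ, ((1 + (q ^ (n + 1)) ^ 2) * ((m + c) * tripleProductCoeff q n (m + 0))
            - q ^ (n + 1) * ((m + c) * tripleProductCoeff q n (m + -1)
              + (m + c) * tripleProductCoeff q n (m + 1))) := finsum_congr fun m => by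
          rw [tripleProductCoeff_succ hq₀ hq, add_zero, sub_eq_add_neg m]
          ring
      _ = (1 + (q ^ (n + 1)) ^ 2) * qPochhammer q n ^ 2
            - q ^ (n + 1) * (qPochhammer q n ^ 2 + qPochhammer q n ^ 2) := by
          rw [finsum_sub_distrib, ← mul_finsum, ← mul_finsum,
            finsum_add_distrib (hfin _) (hfin _), hshift, hshift, hshift]
          · exact (hfin 0).mul_right _
          · exact ((hfin (-1)).add (hfin 1)).mul_right _
      _ = qPochhammer q (n + 1) ^ 2 := by
          rw [qPochhammer_succ]
          ring

end FiniteTripleProduct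

section JacobiIdentity

variable {q : ℂ}

/-- Euler's function `(q; q)_∞`. -/
noncomputable def eulerFunction (q : ℂ) : ℂ := ∏' n : ℕ, (1 - q ^ (n + 1))

lemma pow_succ_ne_one_of_norm_lt_one (hq : ‖q‖ < 1) (n : ℕ) : q ^ (n + 1) ≠ 1 := fun h =>
  (pow_lt_one₀ (norm_nonneg q) hq n.succ_ne_zero).ne <| by rw [← norm_pow, h, norm_one]

lemma eulerFunction_ne_zero (hq : ‖q‖ < 1) : eulerFunction q ≠ 0 := by
  simp only [eulerFunction, sub_eq_add_neg]
  refine tprod_one_add_ne_zero_of_summable (fun n => ?_) ?_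
  · rw [← sub_eq_add_neg, sub_ne_zero]
    exact (pow_succ_ne_one_of_norm_lt_one hq n).symm
  · simpa using (summable_nat_add_iff 1).mpr (summable_geometric_of_lt_one (norm_nonneg q) hq)

lemma tendsto_qPochhammer (hq : ‖q‖ < 1) :
    Tendsto (qPochhammer q) atTop (𝓝 (eulerFunction q)) :=
  (ModularForm.multipliable_one_sub_pow hq).hasProd.tendsto_prod_nat

lemma tendsto_qPochhammerInv (hq : ‖q‖ < 1) :
    Tendsto (qPochhammerInv q) atTop (𝓝 (eulerFunction q)⁻¹) := by
  have htoNat : Tendsto Int.toNat atTop atTop :=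
    tendsto_atTop_atTop_of_monotone (fun _ _ => Int.toNat_le_toNat) fun n => ⟨n, by simp⟩
  refine (((tendsto_qPochhammer hq).comp htoNat).inv₀ (eulerFunction_ne_zero hq)).congr' ?_
  filter_upwards [eventually_ge_atTop 0] with j hj
  rw [qPochhammerInv, if_pos hj, Function.comp_apply]

lemma exists_norm_qPochhammerInv_le (hq : ‖q‖ < 1) : ∃ C, ∀ j, ‖qPochhammerInv q j‖ ≤ C := by
  obtain ⟨C, hC⟩ := ((tendsto_qPochhammer hq).inv₀ (eulerFunction_ne_zero hq)).norm.bddAbove_range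
  refine ⟨max C 0, fun j => ?_⟩
  rw [qPochhammerInv]
  split_ifs
  · exact le_max_of_le_left (hC ⟨_, rfl⟩)
  · simp

lemma tendsto_tripleProductCoeff (hq : ‖q‖ < 1) (m : ℤ) :
    Tendsto (fun n => tripleProductCoeff q n m) atTop
      (𝓝 (thetaTerm q m * (eulerFunction q)⁻¹)) := by
  have hP : Tendsto (fun n : ℕ => qPochhammer q (2 * n + 1)) atTop (𝓝 (eulerFunction q)) :=
    (tendsto_qPochhammer hq).comp <| (tendsto_add_atTop_nat 1).comp <|
      tendsto_id.const_mul_atTop' two_pos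
  have hr (k : ℤ) : Tendsto (fun n : ℕ => qPochhammerInv q (n + k)) atTop
      (𝓝 (eulerFunction q)⁻¹) :=
    (tendsto_qPochhammerInv hq).comp <|
      tendsto_atTop_add_const_right _ k tendsto_natCast_atTop_atTop
  convert ((hP.mul (hr (-m))).mul (hr (m + 1))).const_mul (thetaTerm q m) using 2
  · rw [tripleProductCoeff, sub_eq_add_neg, add_assoc]
  · rw [mul_inv_cancel₀ (eulerFunction_ne_zero hq), one_mul]

lemma exists_norm_tripleProductCoeff_le (hq : ‖q‖ < 1) :
    ∃ C, ∀ n m, ‖tripleProductCoeff q n m‖ ≤ C * ‖thetaTerm q m‖ := by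
  obtain ⟨A, hA⟩ := (tendsto_qPochhammer hq).norm.bddAbove_range
  obtain ⟨B, hB⟩ := exists_norm_qPochhammerInv_le hq
  have hA₀ : 0 ≤ A := (norm_nonneg _).trans (hA ⟨0, rfl⟩)
  have hB₀ : 0 ≤ B := (norm_nonneg _).trans (hB 0)
  refine ⟨A * B * B, fun n m => ?_⟩
  rw [tripleProductCoeff, norm_mul, norm_mul, norm_mul, mul_comm]
  gcongr
  · exact hA ⟨_, rfl⟩
  · exact hB _
  · exact hB _

/-- The exponents of the theta series in `q`. -/
def triangular (n : ℕ) : ℕ := n * (n + 1) / 2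

lemma triangular_succ (n : ℕ) : triangular (n + 1) = triangular n + (n + 1) := by
  rw [triangular, triangular, show (n + 1) * (n + 1 + 1) = n * (n + 1) + (n + 1) * 2 by ring,
    Nat.add_mul_div_right _ _ two_pos]

lemma triangular_strictMono : StrictMono triangular :=
  strictMono_nat_of_lt_succ fun n => by rw [triangular_succ]; lia

/-- The partial theta series `∑ w n * q ^ (n * (n + 1) / 2)` with weights `w`. -/
noncomputable def triangularSum (w : ℕ → ℂ) (q : ℂ) : ℂ := ∑' n, w n * q ^ triangular n

lemma summable_norm_mul_pow_triangular (hq : ‖q‖ < 1) {k : ℕ} {w : ℕ → ℂ}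
    (hw : w =O[atTop] fun n => ((n ^ k : ℕ) : ℂ)) : Summable fun n => ‖w n * q ^ triangular n‖ := by
  refine (summable_norm_mul_geometric_of_norm_lt_one' hq hw).of_nonneg_of_le
    (fun _ => norm_nonneg _) fun n => ?_
  rw [norm_mul, norm_mul, norm_pow, norm_pow]
  gcongr ?_ * ?_
  exact pow_le_pow_of_le_one (norm_nonneg q) hq.le triangular_strictMono.le_apply

lemma isBigO_natCast_add_const (c : ℂ) :
    (fun n : ℕ => (n + c : ℂ)) =O[atTop] fun n => ((n ^ 1 : ℕ) : ℂ) := by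
  simp only [pow_one]
  refine (isBigO_refl _ _).add (IsBigO.of_bound ‖c‖ ?_)
  filter_upwards [eventually_ge_atTop 1] with n hn
  rw [norm_natCast]
  exact le_mul_of_one_le_right (norm_nonneg c) (by exact_mod_cast hn)

/-- The weights of Jacobi's expansion of `(q; q)_∞ ^ 3`. -/
def jacobiCoeff (n : ℕ) : ℤ := (-1) ^ n * (2 * n + 1)

lemma summable_norm_add_mul_thetaTerm (hq : ‖q‖ < 1) (c : ℂ) :
    Summable fun m : ℤ => ‖(m + c) * thetaTerm q m‖ := by
  have hnat (c : ℂ) : Summable fun n : ℕ => ‖(n + c) * thetaTerm q n‖ := by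
    simpa [thetaTerm_natCast, triangular] using
      summable_norm_mul_pow_triangular hq (isBigO_natCast_add_const c)
  refine .of_nat_of_neg_add_one (hnat c) ((hnat (1 - c)).congr fun n => ?_)
  rw [thetaTerm_neg_add_one]
  congr 1
  push_cast
  ring

lemma tsum_add_mul_thetaTerm (hq : ‖q‖ < 1) (c : ℂ) :
    ∑' m : ℤ, (m + c) * thetaTerm q m = triangularSum (fun n => jacobiCoeff n) q := by
  let f (m : ℤ) : ℂ := (m + c) * thetaTerm q m
  have hf : Summable f := (summable_norm_add_mul_thetaTerm hq c).of_norm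
  have hnat : Summable fun n : ℕ => f n := hf.comp_injective Nat.cast_injective
  have hneg : Summable fun n : ℕ => f (-(n + 1)) :=
    hf.comp_injective fun m n h => by simpa using h
  calc ∑' m, f m = ∑' n : ℕ, f n + ∑' n : ℕ, f (-(n + 1)) := tsum_of_nat_of_neg_add_one hnat hneg
    _ = ∑' n : ℕ, (f n + f (-(n + 1))) := (hnat.tsum_add hneg).symm
    _ = ∑' n, jacobiCoeff n * q ^ triangular n := tsum_congr fun n => by
      simp only [f, thetaTerm_neg_add_one, thetaTerm_natCast, jacobiCoeff, triangular]
      push_cast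
      ring

theorem triangularSum_jacobiCoeff (hq : ‖q‖ < 1) :
    triangularSum (fun n => jacobiCoeff n) q = eulerFunction q ^ 3 := by
  rcases eq_or_ne q 0 with rfl | hq₀
  · rw [triangularSum, tsum_eq_single 0 fun n hn => by
      rw [zero_pow (triangular_strictMono.injective.ne hn), mul_zero]]
    simp [jacobiCoeff, eulerFunction, triangular]
  have hlim : Tendsto (fun n => qPochhammer q n ^ 2) atTop
      (𝓝 (∑' m : ℤ, (m + 0) * (thetaTerm q m * (eulerFunction q)⁻¹))) := by
    obtain ⟨C, hC⟩ := exists_norm_tripleProductCoeff_le hq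
    refine (tendsto_tsum_of_dominated_convergence
      ((summable_norm_add_mul_thetaTerm hq 0).mul_left C)
      (fun m => (tendsto_tripleProductCoeff hq m).const_mul ((m : ℂ) + 0))
      (.of_forall fun n m => ?_)).congr fun n => ?_
    · rw [norm_mul, norm_mul, mul_left_comm]
      gcongr
      exact hC n m
    · rw [tsum_eq_finsum (by simpa using hasFiniteSupport_mul_tripleProductCoeff q n 0 _),
        finsum_add_mul_tripleProductCoeff hq₀ (pow_succ_ne_one_of_norm_lt_one hq)]
  have h := tendsto_nhds_unique hlim ((tendsto_qPochhammer hq).pow 2)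
  simp only [← mul_assoc] at h
  rw [tsum_mul_right, tsum_add_mul_thetaTerm hq,
    mul_inv_eq_iff_eq_mul₀ (eulerFunction_ne_zero hq)] at h
  rw [h, ← pow_succ]

end JacobiIdentity

section PowerSeriesOnBall

open FormalMultilinearSeries (ofScalars)

/-- `F` converges to `f` on the open disc of radius `r` around the origin. -/
def HasSumOnBall (F : PowerSeries ℂ) (r : ℝ) (f : ℂ → ℂ) : Prop :=
  ∀ ⦃q : ℂ⦄, ‖q‖ < r → HasSum (fun n => PowerSeries.coeff n F * q ^ n) (f q)

namespace HasSumOnBall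

variable {F G : PowerSeries ℂ} {f g : ℂ → ℂ} {r : ℝ}

lemma hasFPowerSeriesOnBall (hF : HasSumOnBall F r f) (hr : 0 < r) :
    HasFPowerSeriesOnBall f (ofScalars ℂ fun n => PowerSeries.coeff n F) 0 (ENNReal.ofReal r) where
  r_le := ENNReal.le_of_forall_nnreal_lt fun s hs => by
    refine FormalMultilinearSeries.le_radius_of_summable_norm _ ?_
    have hs' : ‖((s : ℝ) : ℂ)‖ < r := by
      simpa [ENNReal.lt_ofReal_iff_toReal_lt] using hs
    simpa [FormalMultilinearSeries.ofScalars_norm] using (hF hs').summable.norm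
  r_pos := ENNReal.ofReal_pos.mpr hr
  hasSum {q} hq := by
    rw [Metric.eball_ofReal, mem_ball_zero_iff] at hq
    simpa only [FormalMultilinearSeries.ofScalars_apply_eq, smul_eq_mul, zero_add] using hF hq

lemma differentiableOn (hF : HasSumOnBall F r f) : DifferentiableOn ℂ f (Metric.ball 0 r) := by
  rcases le_or_gt r 0 with hr | hr
  · rw [Metric.ball_eq_empty.mpr hr]
    exact differentiableOn_empty
  · simpa only [Metric.eball_ofReal] using (hF.hasFPowerSeriesOnBall hr).differentiableOn

lemma unique (hF : HasSumOnBall F r f) (hG : HasSumOnBall G r f) (hr : 0 < r) : F = G := by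
  have h := (hF.hasFPowerSeriesOnBall hr).hasFPowerSeriesAt.eq_formalMultilinearSeries
    (hG.hasFPowerSeriesOnBall hr).hasFPowerSeriesAt
  exact PowerSeries.ext (congrFun (FormalMultilinearSeries.ofScalars_series_injective ℂ ℂ h))

lemma congr (hF : HasSumOnBall F r f) (hfg : ∀ ⦃q⦄, ‖q‖ < r → f q = g q) : HasSumOnBall F r g :=
  fun _ hq => hfg hq ▸ hF hq

lemma mul (hF : HasSumOnBall F r f) (hG : HasSumOnBall G r g) : HasSumOnBall (F * G) r (f * g) := by
  intro q hq
  have hFs := (hF hq).summable.norm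
  have hGs := (hG hq).summable.norm
  have hprod := (summable_norm_sum_mul_antidiagonal_of_summable_norm hFs hGs).of_norm.hasSum
  rw [← tsum_mul_tsum_eq_tsum_sum_antidiagonal_of_summable_norm hFs hGs, (hF hq).tsum_eq,
    (hG hq).tsum_eq] at hprod
  refine hprod.congr_fun fun n => ?_
  rw [PowerSeries.coeff_mul, Finset.sum_mul]
  refine Finset.sum_congr rfl fun p hp => ?_
  rw [← Finset.HasAntidiagonal.mem_antidiagonal.mp hp, pow_add, mul_mul_mul_comm]

lemma exists_of_differentiableOn (hf : DifferentiableOn ℂ f (Metric.ball 0 r)) :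
    ∃ F, HasSumOnBall F r f := by
  refine ⟨.mk fun n => (n.factorial : ℂ)⁻¹ * iteratedDeriv n f 0, fun q hq => ?_⟩
  refine (Complex.hasSum_taylorSeries_on_ball hf (mem_ball_zero_iff.mpr hq)).congr_fun fun n => ?_
  rw [PowerSeries.coeff_mk, sub_zero, smul_eq_mul, smul_eq_mul, mul_assoc, mul_comm (q ^ n)]

-- The Taylor series of `f / g` is the formal quotient, which has coefficients in `R` because the
-- constant term of `D` is a unit there.
lemma exists_div {R : Type*} [CommRing R] (φ : R →+* ℂ) {N D : PowerSeries R}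
    (hN : HasSumOnBall (N.map φ) r f) (hD : HasSumOnBall (D.map φ) r g) (hr : 0 < r)
    (hunit : IsUnit (PowerSeries.constantCoeff D)) (hg : ∀ ⦃q⦄, ‖q‖ < r → g q ≠ 0) :
    ∃ A, A * D = N ∧ HasSumOnBall (A.map φ) r (f / g) := by
  have hD_unit : IsUnit D := PowerSeries.isUnit_iff_constantCoeff.mpr hunit
  obtain ⟨A, rfl⟩ : D ∣ N := hD_unit.dvd
  obtain ⟨Q, hQ⟩ := exists_of_differentiableOn
    (hN.differentiableOn.div hD.differentiableOn fun q hq => hg (mem_ball_zero_iff.mp hq))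
  have hQD : Q * D.map φ = (D * A).map φ :=
    ((hQ.mul hD).congr fun q hq => div_mul_cancel₀ _ (hg hq)).unique hN hr
  rw [map_mul, mul_comm, (hD_unit.map _).mul_right_inj] at hQD
  exact ⟨A, mul_comm A D, hQD ▸ hQ⟩

lemma isBigO_pow (hF : HasSumOnBall F r f) (hr : 0 < r) {N : ℕ} (hN : PowerSeries.X ^ N ∣ F) :
    f =O[𝓝 0] fun q => q ^ N := by
  have h := (hF.hasFPowerSeriesOnBall hr).hasFPowerSeriesAt.isBigO_sub_partialSum_pow N
  have hzero (q : ℂ) : (ofScalars ℂ fun n => PowerSeries.coeff n F).partialSum N q = 0 :=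
    Finset.sum_eq_zero fun n hn => by
      rw [FormalMultilinearSeries.ofScalars_apply_eq,
        PowerSeries.X_pow_dvd_iff.mp hN n (Finset.mem_range.mp hn), zero_smul]
  simpa only [zero_add, hzero, sub_zero, ← norm_pow, isBigO_norm_right] using h

end HasSumOnBall

/-- The power series `∑ w n * X ^ (n * (n + 1) / 2)`, the formal counterpart of
`triangularSum`. -/
noncomputable def triangularSeries {R : Type*} [Semiring R] (w : ℕ → R) : PowerSeries R :=
  .mk (Function.extend triangular w 0)

lemma coeff_triangularSeries_triangular {R : Type*} [Semiring R] (w : ℕ → R) (n : ℕ) :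
    PowerSeries.coeff (triangular n) (triangularSeries w) = w n := by
  rw [triangularSeries, PowerSeries.coeff_mk, triangular_strictMono.injective.extend_apply]

lemma map_triangularSeries {R S : Type*} [Semiring R] [Semiring S] (φ : R →+* S) (w : ℕ → R) :
    (triangularSeries w).map φ = triangularSeries (φ ∘ w) := by
  ext l
  rw [PowerSeries.coeff_map, triangularSeries, triangularSeries, PowerSeries.coeff_mk,
    PowerSeries.coeff_mk, Function.apply_extend φ,
    show φ ∘ (0 : ℕ → R) = 0 from funext fun _ => map_zero φ]

lemma X_pow_dvd_triangularSeries {R : Type*} [Semiring R] {w : ℕ → R} {N : ℕ}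
    (hw : ∀ n, triangular n < N → w n = 0) : PowerSeries.X ^ N ∣ triangularSeries w := by
  refine PowerSeries.X_pow_dvd_iff.mpr fun l hl => ?_
  by_cases h : ∃ n, triangular n = l
  · obtain ⟨n, rfl⟩ := h
    rw [coeff_triangularSeries_triangular, hw n hl]
  · rw [triangularSeries, PowerSeries.coeff_mk, Function.extend_apply' _ _ _ h, Pi.zero_apply]

lemma hasSumOnBall_triangularSeries {k : ℕ} {w : ℕ → ℂ}
    (hw : w =O[atTop] fun n => ((n ^ k : ℕ) : ℂ)) :
    HasSumOnBall (triangularSeries w) 1 (triangularSum w) := by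
  intro q hq
  have h := (summable_norm_mul_pow_triangular hq hw).of_norm.hasSum
  rw [← hasSum_extend_zero triangular_strictMono.injective] at h
  refine h.congr_fun fun l => ?_
  by_cases hl : ∃ n, triangular n = l
  · obtain ⟨n, rfl⟩ := hl
    rw [coeff_triangularSeries_triangular, triangular_strictMono.injective.extend_apply]
  · rw [triangularSeries, PowerSeries.coeff_mk, Function.extend_apply' _ _ _ hl,
      Function.extend_apply' _ _ _ hl, Pi.zero_apply, zero_mul]

end PowerSeriesOnBall

section Exponential

lemma e_eq_qParam (τ : ℂ) : e τ = Function.Periodic.qParam 1 τ := by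
  rw [e, Function.Periodic.qParam, Complex.ofReal_one, div_one]

lemma e_add (a b : ℂ) : e (a + b) = e a * e b := by
  rw [e, e, e, mul_add, Complex.exp_add]

lemma e_ne_zero (a : ℂ) : e a ≠ 0 := Complex.exp_ne_zero _

lemma e_zpow (a : ℂ) (n : ℤ) : e a ^ n = e (n * a) := by
  rw [e, e, ← Complex.exp_int_mul, mul_left_comm]

lemma e_one_div_two : e (1 / 2) = -1 := by
  rw [e, show 2 * (Real.pi : ℂ) * I * (1 / 2) = Real.pi * I by ring, exp_pi_mul_I]

lemma e_one_div_four : e (1 / 4) = I := by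
  rw [e, show 2 * (Real.pi : ℂ) * I * (1 / 4) = Real.pi / 2 * I by ring, exp_pi_div_two_mul_I]

lemma norm_e (τ : ℂ) : ‖e τ‖ = Real.exp (-2 * Real.pi * τ.im) := by
  rw [e_eq_qParam, Function.Periodic.norm_qParam, div_one]

lemma norm_e_lt_one {τ : ℂ} (hτ : 0 < τ.im) : ‖e τ‖ < 1 := by
  rw [e_eq_qParam]
  exact Function.Periodic.norm_qParam_lt_one one_pos hτ

lemma tendsto_e_comap_im_atTop : Tendsto e (comap im atTop) (𝓝 0) := by
  rw [funext e_eq_qParam]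
  exact (Function.Periodic.qParam_tendsto one_pos).mono_right nhdsWithin_le_nhds

lemma differentiable_e : Differentiable ℂ e := by
  unfold e
  fun_prop

lemma e_half_integer_term (τ : ℂ) (m : ℤ) :
    e ((m + 1 / 2) ^ 2 / 2 * τ + (m + 1 / 2) / 2) = I * e (τ / 8) * thetaTerm (e τ) m := by
  have hm : ((m * (m + 1) / 2 : ℤ) : ℂ) = m * (m + 1) / 2 := by
    rw [Int.cast_div (Int.even_mul_succ_self m).two_dvd two_ne_zero]
    push_cast
    rfl
  rw [thetaTerm, ← e_one_div_two, ← e_one_div_four, e_zpow, e_zpow, hm, ← e_add, ← e_add, ← e_add]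
  ring_nf

lemma eta3_eq_mul_eulerFunction_pow {τ : ℂ} (hτ : 0 < τ.im) :
    eta3 τ = e (τ / 8) * eulerFunction (e τ) ^ 3 := by
  have hq := norm_e_lt_one hτ
  simp only [eta3, e_half_integer_term]
  rw [← triangularSum_jacobiCoeff hq, ← tsum_add_mul_thetaTerm hq (1 / 2), ← tsum_mul_left,
    ← tsum_mul_left]
  refine tsum_congr fun m => ?_
  linear_combination (-(m + 1 / 2 : ℂ) * e (τ / 8) * thetaTerm (e τ) m) * I_mul_I

lemma exists_tsum_int_eq_tsum_pow {M : ℕ} (hM : M ≠ 0) (a : ℕ → ℤ) :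
    ∃ c : ℤ → ℤ, (∀ n, c n ≠ 0 → ∃ l : ℕ, n = M * l ∧ a l ≠ 0) ∧
      ∀ τ, ∑' n : ℤ, c n * e (n * τ / M) = ∑' l, a l * e τ ^ l := by
  have hinj : Function.Injective fun l : ℕ => (M * l : ℤ) :=
    (mul_right_injective₀ (Nat.cast_ne_zero.mpr hM)).comp Nat.cast_injective
  have hsupp (n : ℤ) (hn : Function.extend (fun l : ℕ => (M * l : ℤ)) a 0 n ≠ 0) :
      ∃ l : ℕ, n = M * l ∧ a l ≠ 0 := by
    by_cases h : ∃ l : ℕ, (M * l : ℤ) = n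
    · obtain ⟨l, rfl⟩ := h
      exact ⟨l, rfl, hinj.extend_apply a 0 l ▸ hn⟩
    · exact absurd (Function.extend_apply' _ _ _ h) hn
  refine ⟨_, hsupp, fun τ => ?_⟩
  rw [← hinj.tsum_eq fun n hn => ?_]
  · refine tsum_congr fun l => ?_
    rw [hinj.extend_apply, ← zpow_natCast, e_zpow]
    congr 2
    push_cast
    field_simp
  · obtain ⟨l, rfl, -⟩ := hsupp n (Int.cast_ne_zero.mp (left_ne_zero_of_mul hn))
    exact ⟨l, rfl⟩

lemma isBigO_comp_e {f : ℂ → ℂ} {N : ℕ} {s : ℝ} (hf : f =O[𝓝 0] fun q => q ^ N) (hs : s ≤ N) :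
    (fun τ => f (e τ)) =O[comap im atTop] fun τ => Real.exp (-2 * Real.pi * τ.im * s) := by
  refine (hf.comp_tendsto tendsto_e_comap_im_atTop).trans (IsBigO.of_bound 1 ?_)
  filter_upwards [preimage_mem_comap (Ici_mem_atTop 0)] with τ (hτ : 0 ≤ τ.im)
  rw [Function.comp_apply, norm_pow, norm_e, ← Real.exp_nat_mul, Real.norm_eq_abs, Real.abs_exp,
    one_mul, Real.exp_le_exp]
  have := mul_le_mul_of_nonneg_left hs (mul_nonneg Real.two_pi_pos.le hτ)
  linarith

lemma exists_norm_le_mul_of_isBigO_comap_im {f : ℂ → ℂ} {g : ℂ → ℝ}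
    (h : f =O[comap im atTop] g) (hg : ∀ τ, 0 ≤ g τ) :
    ∃ C v₀ : ℝ, ∀ τ, v₀ ≤ τ.im → ‖f τ‖ ≤ C * g τ := by
  obtain ⟨C, hC⟩ := h.bound
  obtain ⟨v₀, hv₀⟩ := eventually_atTop.mp (eventually_comap.mp hC)
  exact ⟨C, v₀, fun τ hτ => (hv₀ _ hτ τ rfl).trans_eq (by rw [Real.norm_of_nonneg (hg τ)])⟩

end Exponential

section GPlus

variable {x : ℝ} {τ : ℂ} {b : ℕ}

/-- The weights of the partial theta series in the numerator of `gplus τ x`. -/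
noncomputable def gplusWeight (x : ℝ) (n : ℕ) : ℝ := x.sign * ((-1) ^ n * max (n + 1 / 2 - |x|) 0)

/-- The function `G` on the unit disc with `gplus τ x = e (-x ^ 2 * τ / 2) * G (e τ)`. -/
noncomputable def gplusDisc (x : ℝ) : ℂ → ℂ :=
  triangularSum (fun n => gplusWeight x n) / eulerFunction ^ 3

lemma gplus_eq_mul_gplusDisc (x : ℝ) (hτ : 0 < τ.im) :
    gplus τ x = e (-(x : ℂ) ^ 2 * τ / 2) * gplusDisc x (e τ) := by
  have hsum : (∑' m : ℤ, if |x| < (m : ℝ) + 1/2 then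
      (((m : ℝ) + 1/2 - |x| : ℝ) : ℂ) * e (((m : ℂ) + 1/2)^2 / 2 * τ + ((m : ℂ) + 1/2) / 2)
      else 0) = ∑' n : ℕ, (max (n + 1 / 2 - |x|) 0 : ℝ) * (I * e (τ / 8) * thetaTerm (e τ) n) := by
    rw [← Nat.cast_injective.tsum_eq (f := fun m : ℤ => ite _ _ _) fun m hm => ?_]
    · refine tsum_congr fun n => ?_
      rw [e_half_integer_term, Int.cast_natCast]
      split_ifs with h
      · rw [max_eq_left (sub_nonneg.mpr h.le)]
      · rw [max_eq_right (sub_nonpos.mpr (not_lt.mp h)), ofReal_zero, zero_mul]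
    · have hm : |x| < (m : ℝ) + 1 / 2 := by
        by_contra h
        exact hm (if_neg h)
      have : (-1 : ℝ) < m := by linarith [abs_nonneg x]
      exact ⟨m.toNat, Int.toNat_of_nonneg (by exact_mod_cast this)⟩
  rw [gplus, hsum, eta3_eq_mul_eulerFunction_pow hτ, gplusDisc, Pi.div_apply, Pi.pow_apply,
    triangularSum, mul_assoc, ← tsum_mul_left, ← tsum_div_const]
  congr 1
  refine tsum_congr fun n => ?_
  have hφ := eulerFunction_ne_zero (norm_e_lt_one hτ)
  have he := e_ne_zero (τ / 8)
  rw [thetaTerm_natCast, gplusWeight, triangular]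
  push_cast
  field_simp

lemma abs_gplusWeight_le (x : ℝ) (n : ℕ) : |gplusWeight x n| ≤ max (n + 1 / 2 - |x|) 0 := by
  have hsign : |x.sign| ≤ 1 := by
    rcases Real.sign_apply_eq x with h | h | h <;> simp [h]
  rw [gplusWeight, abs_mul, abs_mul, abs_neg_one_pow, one_mul,
    abs_of_nonneg (le_max_right (n + 1 / 2 - |x|) 0)]
  exact mul_le_of_le_one_left (le_max_right _ _) hsign

lemma isBigO_gplusWeight (x : ℝ) :
    (fun n => (gplusWeight x n : ℂ)) =O[atTop] fun n => ((n ^ 1 : ℕ) : ℂ) := by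
  refine .trans (isBigO_of_le _ fun n => ?_) (isBigO_natCast_add_const (1 / 2))
  have hmax : max (n + 1 / 2 - |x|) 0 ≤ (n + 1 / 2 : ℝ) :=
    max_le (sub_le_self _ (abs_nonneg x)) (by positivity)
  calc ‖(gplusWeight x n : ℂ)‖ ≤ n + 1 / 2 := (norm_real _).trans_le <|
        (abs_gplusWeight_le x n).trans hmax
    _ = ‖(n + 1 / 2 : ℂ)‖ := by
        rw [← Real.norm_of_nonneg (by positivity : (0 : ℝ) ≤ n + 1 / 2), ← norm_real]
        push_cast
        rfl

lemma isBigO_jacobiCoeff : (fun n => (jacobiCoeff n : ℂ)) =O[atTop] fun n => ((n ^ 1 : ℕ) : ℂ) := by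
  refine .trans (.of_bound 2 (.of_forall fun n => ?_)) (isBigO_natCast_add_const (1 / 2))
  calc ‖(jacobiCoeff n : ℂ)‖ = ‖(2 * (n + 1 / 2) : ℂ)‖ := by
        rw [jacobiCoeff]
        push_cast
        rw [norm_mul, norm_pow, norm_neg, norm_one, one_pow, one_mul]
        ring_nf
    _ ≤ 2 * ‖(n + 1 / 2 : ℂ)‖ := by rw [norm_mul, Complex.norm_two]

lemma hasSumOnBall_eulerFunction_pow_three :
    HasSumOnBall ((triangularSeries jacobiCoeff).map (Int.castRingHom ℂ)) 1
      (eulerFunction ^ 3) := by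
  rw [map_triangularSeries]
  exact (hasSumOnBall_triangularSeries isBigO_jacobiCoeff).congr fun q hq =>
    triangularSum_jacobiCoeff hq

lemma differentiableOn_gplusDisc (x : ℝ) : DifferentiableOn ℂ (gplusDisc x) (Metric.ball 0 1) :=
  (hasSumOnBall_triangularSeries (isBigO_gplusWeight x)).differentiableOn.div
    hasSumOnBall_eulerFunction_pow_three.differentiableOn fun _ hq =>
      pow_ne_zero 3 (eulerFunction_ne_zero (mem_ball_zero_iff.mp hq))

theorem differentiableAt_gplus (x : ℝ) (hτ : 0 < τ.im) :
    DifferentiableAt ℂ (fun σ => gplus σ x) τ := by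
  have hdisc : DifferentiableAt ℂ (gplusDisc x) (e τ) :=
    (differentiableOn_gplusDisc x).differentiableAt
      (Metric.isOpen_ball.mem_nhds (mem_ball_zero_iff.mpr (norm_e_lt_one hτ)))
  have hexp : DifferentiableAt ℂ (fun σ => e (-(x : ℂ) ^ 2 * σ / 2)) τ :=
    (differentiable_e _).comp τ (by fun_prop)
  refine (hexp.mul (hdisc.comp τ (differentiable_e τ))).congr_of_eventuallyEq ?_
  filter_upwards [(isOpen_lt continuous_const continuous_im).mem_nhds hτ] with σ hσ
  exact gplus_eq_mul_gplusDisc x hσ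

lemma exists_intCast_eq_mul_gplusWeight (hb : 0 < b) (hbe : Even b)
    (hx : ∃ k : ℤ, x = (k : ℝ) / b) (n : ℕ) : ∃ w : ℤ, (w : ℝ) = b * gplusWeight x n := by
  obtain ⟨k, rfl⟩ := hx
  obtain ⟨h, rfl⟩ := hbe
  obtain ⟨s, hs⟩ : ∃ s : ℤ, (s : ℝ) = Real.sign (k / (h + h : ℕ)) := by
    rcases Real.sign_apply_eq (k / (h + h : ℕ)) with hs | hs | hs <;> rw [hs]
    exacts [⟨-1, by simp⟩, ⟨0, by simp⟩, ⟨1, by simp⟩]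
  refine ⟨s * ((-1) ^ n * max (h * (2 * n + 1) - |k|) 0), ?_⟩
  have hb' : (0 : ℝ) < (h + h : ℕ) := Nat.cast_pos.mpr hb
  have hmax : (h + h : ℕ) * max (n + 1 / 2 - |(k : ℝ) / (h + h : ℕ)|) 0
      = max (h * (2 * n + 1) - |(k : ℝ)|) 0 := by
    rw [mul_max_of_nonneg _ _ hb'.le, mul_zero, abs_div, abs_of_pos hb', mul_sub,
      mul_div_cancel₀ _ hb'.ne']
    push_cast
    ring_nf
  rw [gplusWeight, ← hs, mul_left_comm _ (s : ℝ), mul_left_comm _ ((-1 : ℝ) ^ n) (max _ _), hmax]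
  push_cast
  rfl

lemma le_triangular_of_mul_gplusWeight_eq_intCast (hb : 0 < b) {n : ℕ} {w : ℤ}
    (hw : (w : ℝ) = b * gplusWeight x n) (hw₀ : w ≠ 0) :
    (|x| + 1 / b) ^ 2 / 2 - 1 / 8 ≤ triangular n := by
  have hb' : (0 : ℝ) < b := Nat.cast_pos.mpr hb
  have hone : 1 ≤ b * max (n + 1 / 2 - |x|) 0 :=
    calc (1 : ℝ) ≤ |(w : ℝ)| := by exact_mod_cast Int.one_le_abs hw₀
      _ = b * |gplusWeight x n| := by rw [hw, abs_mul, Nat.abs_cast]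
      _ ≤ b * max (n + 1 / 2 - |x|) 0 := by gcongr; exact abs_gplusWeight_le x n
  have hgap : |x| + 1 / b ≤ n + 1 / 2 := by
    rcases max_choice (n + 1 / 2 - |x|) 0 with hmax | hmax <;> rw [hmax] at hone
    · have := (div_le_iff₀' hb').mpr hone
      linarith
    · linarith
  have htri : (triangular n : ℝ) = (n + 1 / 2) ^ 2 / 2 - 1 / 8 := by
    rw [triangular, Nat.cast_div (Nat.even_mul_succ_self n).two_dvd two_ne_zero]
    push_cast
    ring
  rw [htri]
  gcongr

theorem exists_integral_series_gplusDisc (hb : 0 < b) (hbe : Even b)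
    (hx : ∃ k : ℤ, x = (k : ℝ) / b) :
    ∃ A : PowerSeries ℤ, PowerSeries.X ^ ⌈(|x| + 1 / b) ^ 2 / 2 - 1 / 8⌉₊ ∣ A ∧
      HasSumOnBall (A.map (Int.castRingHom ℂ)) 1 fun q => b * gplusDisc x q := by
  choose w hw using exists_intCast_eq_mul_gplusWeight hb hbe hx
  have hw' (n : ℕ) : (w n : ℂ) = b * gplusWeight x n := by exact_mod_cast congrArg ofReal (hw n)
  have hN : HasSumOnBall ((triangularSeries w).map (Int.castRingHom ℂ)) 1
      fun q => b * triangularSum (fun n => gplusWeight x n) q := by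
    rw [map_triangularSeries]
    refine (hasSumOnBall_triangularSeries (k := 1) ?_).congr fun q _ => ?_
    · simpa [Function.comp_def, hw'] using (isBigO_gplusWeight x).const_mul_left (b : ℂ)
    · simp [triangularSum, hw', mul_assoc, tsum_mul_left]
  have hconst : PowerSeries.constantCoeff (triangularSeries jacobiCoeff) = 1 :=
    (PowerSeries.coeff_zero_eq_constantCoeff_apply _).symm.trans <|
      (coeff_triangularSeries_triangular jacobiCoeff 0).trans (by norm_num [jacobiCoeff])
  obtain ⟨A, hAD, hA⟩ := hN.exists_div _ hasSumOnBall_eulerFunction_pow_three one_pos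
    (hconst ▸ isUnit_one) fun q hq => pow_ne_zero 3 (eulerFunction_ne_zero hq)
  refine ⟨A, ?_, hA.congr fun q _ => mul_div_assoc _ _ _⟩
  rw [← (PowerSeries.isUnit_iff_constantCoeff.mpr (hconst ▸ isUnit_one)).dvd_mul_right, hAD]
  refine X_pow_dvd_triangularSeries fun n hn => of_not_not fun hwn => ?_
  exact (Nat.lt_ceil.mp hn).not_ge (le_triangular_of_mul_gplusWeight_eq_intCast hb (hw n) hwn)

lemma mul_gplus_eq_tsum {F : PowerSeries ℂ} {c : ℂ}
    (hF : HasSumOnBall F 1 fun q => c * gplusDisc x q) (hτ : 0 < τ.im) :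
    c * e ((x : ℂ) ^ 2 * τ / 2) * gplus τ x = ∑' l, PowerSeries.coeff l F * e τ ^ l := by
  have hcancel : e ((x : ℂ) ^ 2 * τ / 2) * e (-(x : ℂ) ^ 2 * τ / 2) = 1 := by
    rw [← e_add, neg_mul, neg_div, add_neg_cancel, e, mul_zero, Complex.exp_zero]
  rw [(hF (norm_e_lt_one hτ)).tsum_eq, gplus_eq_mul_gplusDisc x hτ]
  linear_combination c * gplusDisc x (e τ) * hcancel

lemma isBigO_gplus_of_X_pow_dvd {F : PowerSeries ℂ} {c : ℂ} {N : ℕ} {s : ℝ} (hc : c ≠ 0)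
    (hF : HasSumOnBall F 1 fun q => c * gplusDisc x q) (hdvd : PowerSeries.X ^ N ∣ F)
    (hs : x ^ 2 / 2 + s ≤ N) :
    (fun τ => gplus τ x) =O[comap im atTop] fun τ => Real.exp (-2 * Real.pi * τ.im * s) := by
  have hdisc := isBigO_comp_e
    ((isBigO_const_mul_left_iff hc).mp (hF.isBigO_pow one_pos hdvd)) hs
  have hnorm (τ : ℂ) : ‖e (-(x : ℂ) ^ 2 * τ / 2)‖ =
      Real.exp (-2 * Real.pi * τ.im * -(x ^ 2 / 2)) := by
    rw [norm_e, show -(x : ℂ) ^ 2 * τ / 2 = ((-(x ^ 2 / 2) : ℝ) : ℂ) * τ by push_cast; ring,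
      im_ofReal_mul, mul_comm (-(x ^ 2 / 2)), mul_assoc (-2 * Real.pi)]
  have hexp : (fun τ => e (-(x : ℂ) ^ 2 * τ / 2)) =O[comap im atTop]
      fun τ => Real.exp (-2 * Real.pi * τ.im * -(x ^ 2 / 2)) :=
    isBigO_of_le _ fun τ => by rw [hnorm, Real.norm_of_nonneg (Real.exp_nonneg _)]
  refine (hexp.mul hdisc).congr' ?_ (.of_forall fun τ => ?_)
  · filter_upwards [preimage_mem_comap (Ioi_mem_atTop 0)] with τ hτ
    exact (gplus_eq_mul_gplusDisc x hτ).symm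
  · simp only [← Real.exp_add]
    ring_nf

end GPlus

/-- `g⁺_τ(x)` for `x ∈ (1/b)ℤ`: holomorphy, integral Fourier coefficients with
bounded denominator, and decay as `v → ∞`. -/
theorem gplus_rational_q_expansion (b : ℕ) (hb : 0 < b) (hbe : Even b) (x : ℝ)
    (hx : ∃ k : ℤ, x = (k : ℝ) / b) :
    (∀ τ : ℂ, 0 < τ.im → DifferentiableAt ℂ (fun σ => gplus σ x) τ) ∧
    (∃ a : ℤ → ℤ,
      (∀ n : ℤ, (n : ℝ) / (8 * b^2) < |x| / b + 1 / (2 * b^2) - 1/8 → a n = 0) ∧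
      (∀ τ : ℂ, 0 < τ.im →
        (b : ℂ) * e ((x : ℂ)^2 * τ / 2) * gplus τ x =
          ∑' n : ℤ, (a n : ℂ) * e ((n : ℂ) * τ / (8 * (b : ℂ)^2)))) ∧
    (∃ C v₀ : ℝ, ∀ τ : ℂ, v₀ ≤ τ.im →
      ‖gplus τ x‖ ≤ C * Real.exp (-2 * Real.pi * τ.im * (|x| / b + 1 / (2 * b^2) - 1/8))) := by
  obtain ⟨A, hdvd, hA⟩ := exists_integral_series_gplusDisc hb hbe hx
  obtain ⟨c, hc, hsum⟩ := exists_tsum_int_eq_tsum_pow (M := 8 * b ^ 2) (by positivity)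
    fun l => PowerSeries.coeff l A
  have hord : x ^ 2 / 2 + (|x| / b + 1 / (2 * b ^ 2) - 1 / 8)
      ≤ ⌈(|x| + 1 / b) ^ 2 / 2 - 1 / 8⌉₊ :=
    (Nat.le_ceil _).trans' (le_of_eq (by rw [← sq_abs x]; ring))
  refine ⟨fun τ => differentiableAt_gplus x, ⟨c, fun n hn => ?_, fun τ hτ => ?_⟩, ?_⟩
  · by_contra hcn
    obtain ⟨l, rfl, hl⟩ := hc n hcn
    have hNl : (⌈(|x| + 1 / b) ^ 2 / 2 - 1 / 8⌉₊ : ℝ) ≤ l :=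
      Nat.cast_le.mpr (not_lt.mp fun h => hl (PowerSeries.X_pow_dvd_iff.mp hdvd l h))
    push_cast at hn
    rw [mul_div_cancel_left₀ _ (by positivity)] at hn
    linarith [sq_nonneg x]
  · rw [mul_gplus_eq_tsum hA hτ]
    simpa using (hsum τ).symm
  · have hdvd' := map_dvd (PowerSeries.map (Int.castRingHom ℂ)) hdvd
    rw [map_pow, PowerSeries.map_X] at hdvd'
    exact exists_norm_le_mul_of_isBigO_comap_im
      (isBigO_gplus_of_X_pow_dvd (Nat.cast_ne_zero.mpr hb.ne') hA hdvd' hord)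
      fun _ => Real.exp_nonneg _
end

section
/- Let N be a positive even integer and τ ∈ H. Then the series G_τ(x) := ∑_{n ∈ ℤ} g_τ(Nn + x) converges absolutely for every x ∈ ℝ, and the convergence is uniform for x in compact subsets of ℝ ∖ (ℤ+1/2). -/
open Complex MeasureTheory
open scoped Classical

/-!
With `a = π Im τ` and `t = m - |y| > 0`, the identity `m² = y² + 2t|y| + t²` shows that the factor
`exp(a y²)` in front of `g⁺_τ(y)` is absorbed by the terms of the series, up to a factor
`exp(-2a t|y|)`. If `y` keeps distance `δ` from the half-integers different from `y`, then `t ≥ δ`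
and `g⁺_τ(y) = O(exp(-2aδ|y|))`; moreover `g*_τ(y) = O(exp(-a y²))`. This distance is the same for
`y = Nn + x` and `x`, so the series is dominated by a geometric one, uniformly for bounded `x` at
distance at least `δ` from the half-integers.
-/

section

open Asymptotics Filter Set
open scoped Real

theorem norm_e_s12 (w : ℂ) : ‖e w‖ = Real.exp (-(2 * π * w.im)) := by
  simp [e, Complex.norm_exp]

theorem norm_e_neg_sq_mul_div_two (τ : ℂ) (y : ℝ) :
    ‖e (-(y : ℂ) ^ 2 * τ / 2)‖ = Real.exp (π * τ.im * y ^ 2) := by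
  have real_mul : -(y : ℂ) ^ 2 * τ / 2 = ((-y ^ 2 / 2 : ℝ) : ℂ) * τ := by push_cast; ring
  rw [norm_e_s12, real_mul, Complex.im_ofReal_mul]
  ring_nf

theorem norm_e_sq_div_two_mul_add_div_two (τ : ℂ) (s : ℝ) :
    ‖e ((s : ℂ) ^ 2 / 2 * τ + (s : ℂ) / 2)‖ = Real.exp (-(π * τ.im * s ^ 2)) := by
  have real_mul_add : (s : ℂ) ^ 2 / 2 * τ + (s : ℂ) / 2
      = ((s ^ 2 / 2 : ℝ) : ℂ) * τ + ((s / 2 : ℝ) : ℂ) := by push_cast; ring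
  rw [norm_e_s12, real_mul_add, Complex.add_im, Complex.im_ofReal_mul, Complex.ofReal_im]
  ring_nf

theorem norm_ofReal_sign_le_one (y : ℝ) : ‖(Real.sign y : ℂ)‖ ≤ 1 := by
  rcases Real.sign_apply_eq y with h | h | h <;> simp [h]

theorem exp_neg_mul_sq_le {a : ℝ} (ha : 0 ≤ a) (δ y : ℝ) :
    Real.exp (-(a * y ^ 2)) ≤ Real.exp (a * δ ^ 2) * Real.exp (-(2 * a * δ * |y|)) := by
  rw [← Real.exp_add, Real.exp_le_exp, ← sq_abs y]
  linear_combination a * sq_nonneg (|y| - δ)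

theorem mul_exp_neg_mul_sq_le {a : ℝ} (ha : 0 < a) (t : ℝ) :
    t * Real.exp (-(a * t ^ 2)) ≤ Real.exp (1 / a) * Real.exp (-t) := by
  have t_le_exp : t ≤ Real.exp t := by linarith [Real.add_one_le_exp t]
  have complete_square : t + -(a * t ^ 2) = 1 / a + -t - a * (t - 1 / a) ^ 2 := by
    field_simp
    ring
  calc t * Real.exp (-(a * t ^ 2))
      ≤ Real.exp t * Real.exp (-(a * t ^ 2)) := by gcongr
    _ = Real.exp (1 / a + -t - a * (t - 1 / a) ^ 2) := by rw [← Real.exp_add, complete_square]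
    _ ≤ Real.exp (1 / a + -t) := Real.exp_le_exp.2 (sub_le_self _ (by positivity))
    _ = Real.exp (1 / a) * Real.exp (-t) := Real.exp_add _ _

theorem mul_exp_neg_mul_add_sq_le {a δ s t : ℝ} (ha : 0 < a) (hs : 0 ≤ s) (ht : 0 ≤ t)
    (hδ : δ ≤ t) :
    t * Real.exp (-(a * (s + t) ^ 2)) ≤
      Real.exp (-(a * s ^ 2)) * Real.exp (-(2 * a * δ * s)) *
        (Real.exp (1 / a) * Real.exp (-t)) := by
  have expand : Real.exp (-(a * (s + t) ^ 2))
      = Real.exp (-(a * s ^ 2)) * Real.exp (-(2 * a * t * s)) * Real.exp (-(a * t ^ 2)) := by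
    rw [← Real.exp_add, ← Real.exp_add]
    ring_nf
  calc t * Real.exp (-(a * (s + t) ^ 2))
      = Real.exp (-(a * s ^ 2)) * Real.exp (-(2 * a * t * s)) *
          (t * Real.exp (-(a * t ^ 2))) := by rw [expand]; ring
    _ ≤ Real.exp (-(a * s ^ 2)) * Real.exp (-(2 * a * δ * s)) *
          (Real.exp (1 / a) * Real.exp (-t)) := by
        gcongr Real.exp _ * Real.exp (-(2 * a * ?_ * s)) * ?_
        exact mul_exp_neg_mul_sq_le ha t

theorem summable_exp_neg_mul_abs_int {c : ℝ} (hc : 0 < c) :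
    Summable fun k : ℤ => Real.exp (-(c * |(k : ℝ)|)) := by
  have geometric : Summable fun n : ℕ => Real.exp (-(c * n)) :=
    (Real.summable_exp_nat_mul_iff.2 (neg_lt_zero.2 hc)).congr fun n => by ring_nf
  exact .of_nat_of_neg (by simpa using geometric) (by simpa using geometric)

theorem exp_neg_mul_abs_int_add_le {c : ℝ} (hc : 0 ≤ c) (s : ℝ) (m : ℤ) :
    Real.exp (-(c * |m + s|)) ≤ Real.exp c * Real.exp (-(c * |((m + ⌊s⌋ : ℤ) : ℝ)|)) := by
  have abs_le : |((m + ⌊s⌋ : ℤ) : ℝ)| ≤ |m + s| + 1 := by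
    calc |((m + ⌊s⌋ : ℤ) : ℝ)| = |m + s - Int.fract s| := by
          rw [Int.fract]; push_cast; ring_nf
      _ ≤ |m + s| + |Int.fract s| := abs_sub _ _
      _ ≤ |m + s| + 1 := by rw [Int.abs_fract]; gcongr; exact (Int.fract_lt_one s).le
  rw [← Real.exp_add, Real.exp_le_exp]
  linear_combination c * abs_le

theorem summable_exp_neg_mul_abs_int_add_floor {c : ℝ} (hc : 0 < c) (s : ℝ) :
    Summable fun m : ℤ => Real.exp c * Real.exp (-(c * |((m + ⌊s⌋ : ℤ) : ℝ)|)) :=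
  ((Equiv.addRight ⌊s⌋).summable_iff.2 (summable_exp_neg_mul_abs_int hc)).mul_left _

theorem summable_exp_neg_mul_abs_int_add {c : ℝ} (hc : 0 < c) (s : ℝ) :
    Summable fun m : ℤ => Real.exp (-(c * |m + s|)) :=
  .of_nonneg_of_le (fun _ => (Real.exp_pos _).le) (exp_neg_mul_abs_int_add_le hc.le s)
    (summable_exp_neg_mul_abs_int_add_floor hc s)

theorem tsum_exp_neg_mul_abs_int_add_le {c : ℝ} (hc : 0 < c) (s : ℝ) :
    ∑' m : ℤ, Real.exp (-(c * |m + s|)) ≤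
      Real.exp c * ∑' k : ℤ, Real.exp (-(c * |(k : ℝ)|)) := by
  calc ∑' m : ℤ, Real.exp (-(c * |m + s|))
      ≤ ∑' m : ℤ, Real.exp c * Real.exp (-(c * |((m + ⌊s⌋ : ℤ) : ℝ)|)) :=
        (summable_exp_neg_mul_abs_int_add hc s).tsum_le_tsum (exp_neg_mul_abs_int_add_le hc.le s)
          (summable_exp_neg_mul_abs_int_add_floor hc s)
    _ = Real.exp c * ∑' k : ℤ, Real.exp (-(c * |(k : ℝ)|)) := by
        rw [tsum_mul_left]
        congr 1
        exact (Equiv.addRight ⌊s⌋).tsum_eq fun k : ℤ => Real.exp (-(c * |(k : ℝ)|))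

theorem exists_summable_norm_le_of_isBigO_exp_neg_mul_abs {E : Type*} [Norm E] {f : ℝ → E}
    {S K : Set ℝ} {c N : ℝ} (hc : 0 < c) (hN : N ≠ 0)
    (hf : f =O[𝓟 S] fun y => Real.exp (-(c * |y|))) (hK : Bornology.IsBounded K)
    (hS : ∀ x ∈ K, ∀ n : ℤ, N * n + x ∈ S) :
    ∃ u : ℤ → ℝ, Summable u ∧ ∀ n : ℤ, ∀ x ∈ K, ‖f (N * n + x)‖ ≤ u n := by
  obtain ⟨C, hC, hfC⟩ := hf.exists_nonneg
  obtain ⟨R, hR⟩ := hK.exists_norm_le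
  refine ⟨fun n => C * (Real.exp (c * R) * Real.exp (-(c * |N| * |(n : ℝ)|))),
    ((summable_exp_neg_mul_abs_int (by positivity)).mul_left _).mul_left _, fun n x hx => ?_⟩
  have abs_le : |N| * |(n : ℝ)| ≤ |N * n + x| + R := by
    calc |N| * |(n : ℝ)| = |N * n + x - x| := by rw [add_sub_cancel_right, abs_mul]
      _ ≤ |N * n + x| + |x| := abs_sub _ _
      _ ≤ |N * n + x| + R := by gcongr; exact hR x hx
  calc ‖f (N * n + x)‖ ≤ C * Real.exp (-(c * |N * n + x|)) := by
        simpa only [Real.norm_eq_abs, Real.abs_exp] using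
          isBigOWith_principal.1 hfC _ (hS x hx n)
    _ ≤ C * (Real.exp (c * R) * Real.exp (-(c * |N| * |(n : ℝ)|))) := by
        rw [← Real.exp_add]
        gcongr
        linear_combination c * abs_le

theorem erfc_nonneg (z : ℝ) : 0 ≤ erfc z :=
  mul_nonneg (by positivity) (integral_nonneg fun _ => (Real.exp_pos _).le)

theorem integral_exp_neg_sq_Ioi_le {z : ℝ} (hz : 0 ≤ z) :
    ∫ t in Ioi z, Real.exp (-t ^ 2) ≤ Real.exp (-z ^ 2) * (√π / 2) := by
  have integrable_gaussian : Integrable fun t : ℝ => Real.exp (-t ^ 2) := by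
    simpa using integrable_exp_neg_mul_sq one_pos
  have shift : ∫ t in Ioi z, Real.exp (-t ^ 2) = ∫ t in Ioi 0, Real.exp (-(t + z) ^ 2) := by
    simpa using ((measurePreserving_add_right volume z).setIntegral_preimage_emb
      (measurableEmbedding_addRight z) (fun t => Real.exp (-t ^ 2)) (Ioi z)).symm
  calc ∫ t in Ioi z, Real.exp (-t ^ 2)
      = ∫ t in Ioi 0, Real.exp (-(t + z) ^ 2) := shift
    _ ≤ ∫ t in Ioi 0, Real.exp (-z ^ 2) * Real.exp (-t ^ 2) := by
        refine setIntegral_mono_on (integrable_gaussian.comp_add_right z).integrableOn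
          (integrable_gaussian.const_mul _).integrableOn measurableSet_Ioi fun t ht => ?_
        rw [← Real.exp_add, Real.exp_le_exp]
        linear_combination 2 * mul_nonneg (mem_Ioi.1 ht).le hz
    _ = Real.exp (-z ^ 2) * (√π / 2) := by
        rw [integral_const_mul]
        simpa using integral_gaussian_Ioi 1

theorem erfc_le_exp_neg_sq {z : ℝ} (hz : 0 ≤ z) : erfc z ≤ Real.exp (-z ^ 2) := by
  calc erfc z ≤ 2 / √π * (Real.exp (-z ^ 2) * (√π / 2)) := by
        unfold erfc
        gcongr
        exact integral_exp_neg_sq_Ioi_le hz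
    _ = Real.exp (-z ^ 2) := by field_simp

/-- `x` has distance at least `δ` from every half-integer other than `x` itself. The exception lets
half-integers satisfy the condition: there the series converges absolutely as well. -/
def HalfIntGap (δ x : ℝ) : Prop := ∀ m : ℤ, x ≠ m + 1 / 2 → δ ≤ |m + 1 / 2 - x|

namespace HalfIntGap

variable {δ x : ℝ}

theorem neg (h : HalfIntGap δ x) : HalfIntGap δ (-x) := by
  intro m hm
  have reflect : ((-m - 1 : ℤ) : ℝ) + 1 / 2 = -(m + 1 / 2) := by push_cast; ring
  have := h (-m - 1) (by rwa [reflect, ne_eq, ← neg_eq_iff_eq_neg])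
  rwa [reflect, ← abs_neg, show -(-((m : ℝ) + 1 / 2) - x) = m + 1 / 2 - -x by ring] at this

theorem abs (h : HalfIntGap δ x) : HalfIntGap δ |x| := by
  rcases abs_choice x with hx | hx <;> rw [hx]
  exacts [h, h.neg]

theorem int_add (h : HalfIntGap δ x) (k : ℤ) : HalfIntGap δ (k + x) := by
  intro m hm
  have translate : ((m - k : ℤ) : ℝ) + 1 / 2 = m + 1 / 2 - k := by push_cast; ring
  have := h (m - k) (by rwa [translate, ne_eq, eq_sub_iff_add_eq, add_comm])
  rwa [translate, sub_sub] at this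

end HalfIntGap

theorem exists_pos_le_abs_int_add_half_sub {K : Set ℝ} (hK : IsCompact K) (A : Set ℤ)
    (hKA : ∀ x ∈ K, ∀ m ∈ A, x ≠ m + 1 / 2) :
    ∃ δ > 0, ∀ x ∈ K, ∀ m ∈ A, δ ≤ |(m : ℝ) + 1 / 2 - x| := by
  have closed : IsClosed ((fun m : ℤ => (m : ℝ) + 1 / 2) '' A) :=
    ((Homeomorph.addRight (1 / 2 : ℝ)).isClosedEmbedding.comp
      Int.isClosedEmbedding_coe_real).isClosedMap A (isClosed_discrete A)
  have disjoint : Disjoint K ((fun m : ℤ => (m : ℝ) + 1 / 2) '' A) := by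
    rw [disjoint_left]
    rintro _ hx ⟨m, hm, rfl⟩
    exact hKA _ hx m hm rfl
  obtain ⟨δ, hδ, separated⟩ := Metric.exists_pos_forall_lt_edist hK closed disjoint
  refine ⟨δ, NNReal.coe_pos.2 hδ, fun x hx m hm => ?_⟩
  have := separated x hx _ (mem_image_of_mem _ hm)
  rw [edist_nndist, ENNReal.coe_lt_coe, ← NNReal.coe_lt_coe, coe_nndist, dist_comm,
    Real.dist_eq] at this
  exact this.le

theorem exists_pos_halfIntGap (x : ℝ) : ∃ δ > 0, HalfIntGap δ x := by
  obtain ⟨δ, hδ, h⟩ := exists_pos_le_abs_int_add_half_sub (isCompact_singleton (x := x))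
    {m | x ≠ m + 1 / 2} (by rintro _ rfl m hm; exact hm)
  exact ⟨δ, hδ, h x rfl⟩

theorem exists_pos_forall_halfIntGap {K : Set ℝ} (hK : IsCompact K)
    (hne : ∀ x ∈ K, ∀ m : ℤ, x ≠ m + 1 / 2) : ∃ δ > 0, ∀ x ∈ K, HalfIntGap δ x := by
  obtain ⟨δ, hδ, h⟩ := exists_pos_le_abs_int_add_half_sub hK univ fun x hx m _ => hne x hx m
  exact ⟨δ, hδ, fun x hx m _ => h x hx m (mem_univ m)⟩

/-- The summand of the series in `g⁺_τ(y)` belonging to the half-integer `m + 1/2`; it vanishes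
unless `|y| < m + 1/2`. -/
noncomputable def gplusTerm (τ : ℂ) (y : ℝ) (m : ℤ) : ℂ :=
  if |y| < (m : ℝ) + 1 / 2 then
    (((m : ℝ) + 1 / 2 - |y| : ℝ) : ℂ) * e (((m : ℂ) + 1 / 2) ^ 2 / 2 * τ + ((m : ℂ) + 1 / 2) / 2)
  else 0

variable {τ : ℂ} {y δ : ℝ}

theorem norm_gplusTerm_le (hτ : 0 < τ.im) (hy : HalfIntGap δ y) (m : ℤ) :
    ‖gplusTerm τ y m‖ ≤
      Real.exp (-(π * τ.im * y ^ 2)) * Real.exp (-(2 * (π * τ.im) * δ * |y|)) *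
        (Real.exp (1 / (π * τ.im)) * Real.exp (-|m + (1 / 2 - |y|)|)) := by
  rw [gplusTerm]
  split_ifs with hm
  · have ht : 0 < (m : ℝ) + 1 / 2 - |y| := sub_pos.2 hm
    have hδ : δ ≤ (m : ℝ) + 1 / 2 - |y| := by
      simpa only [abs_of_pos ht] using hy.abs m hm.ne
    have norm_phase :
        ‖e (((m : ℂ) + 1 / 2) ^ 2 / 2 * τ + ((m : ℂ) + 1 / 2) / 2)‖
          = Real.exp (-(π * τ.im * (|y| + (m + 1 / 2 - |y|)) ^ 2)) := by
      rw [add_sub_cancel, ← norm_e_sq_div_two_mul_add_div_two]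
      push_cast
      rfl
    rw [norm_mul, Complex.norm_of_nonneg ht.le, norm_phase, ← add_sub_assoc (m : ℝ),
      abs_of_pos ht, ← sq_abs y]
    exact mul_exp_neg_mul_add_sq_le (by positivity) (abs_nonneg y) ht.le hδ
  · rw [norm_zero]
    positivity

theorem norm_tsum_gplusTerm_le (hτ : 0 < τ.im) (hy : HalfIntGap δ y) :
    ‖∑' m, gplusTerm τ y m‖ ≤
      Real.exp (-(π * τ.im * y ^ 2)) * Real.exp (-(2 * (π * τ.im) * δ * |y|)) *
        (Real.exp (1 / (π * τ.im)) *
          (Real.exp 1 * ∑' k : ℤ, Real.exp (-|(k : ℝ)|))) := by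
  have summable_shift : Summable fun m : ℤ => Real.exp (-|m + (1 / 2 - |y|)|) := by
    simpa only [one_mul] using summable_exp_neg_mul_abs_int_add one_pos (1 / 2 - |y|)
  refine (tsum_of_norm_bounded ((summable_shift.hasSum.mul_left _).mul_left _)
    (norm_gplusTerm_le hτ hy)).trans ?_
  gcongr
  simpa only [one_mul] using tsum_exp_neg_mul_abs_int_add_le one_pos (1 / 2 - |y|)

theorem gplus_isBigO_exp_neg_mul_abs (hτ : 0 < τ.im) (δ : ℝ) :
    gplus τ =O[𝓟 {y | HalfIntGap δ y}] fun y => Real.exp (-(2 * (π * τ.im) * δ * |y|)) := by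
  set A : ℝ := Real.exp (1 / (π * τ.im)) *
    (Real.exp 1 * ∑' k : ℤ, Real.exp (-|(k : ℝ)|))
  refine isBigO_principal.2 ⟨‖Complex.I * eta3 τ‖⁻¹ * A, fun y hy => ?_⟩
  calc ‖gplus τ y‖
      = Real.exp (π * τ.im * y ^ 2) *
          (‖(Real.sign y : ℂ)‖ * ‖Complex.I * eta3 τ‖⁻¹) * ‖∑' m, gplusTerm τ y m‖ := by
        rw [← norm_e_neg_sq_mul_div_two, ← norm_inv, ← norm_mul, ← norm_mul, ← norm_mul,
          ← div_eq_mul_inv]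
        rfl
    _ ≤ Real.exp (π * τ.im * y ^ 2) * (1 * ‖Complex.I * eta3 τ‖⁻¹) *
          (Real.exp (-(π * τ.im * y ^ 2)) * Real.exp (-(2 * (π * τ.im) * δ * |y|)) * A) := by
        gcongr
        · exact norm_ofReal_sign_le_one y
        · exact norm_tsum_gplusTerm_le hτ hy
    _ = ‖Complex.I * eta3 τ‖⁻¹ * A * ‖Real.exp (-(2 * (π * τ.im) * δ * |y|))‖ := by
        rw [Real.norm_eq_abs, Real.abs_exp, Real.exp_neg (π * τ.im * y ^ 2)]
        field_simp

theorem norm_gstar_le (hτ : 0 ≤ τ.im) (y : ℝ) :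
    ‖gstar τ y‖ ≤ Real.exp (-(π * τ.im * y ^ 2)) := by
  have erfc_le : erfc (√(2 * π * τ.im) * |y|) ≤ Real.exp (-(2 * π * τ.im * y ^ 2)) := by
    simpa only [mul_pow, Real.sq_sqrt (by positivity : 0 ≤ 2 * π * τ.im), sq_abs] using
      erfc_le_exp_neg_sq (by positivity : 0 ≤ √(2 * π * τ.im) * |y|)
  calc ‖gstar τ y‖
      = Real.exp (π * τ.im * y ^ 2) * (‖(Real.sign y : ℂ)‖ / 2) *
          erfc (√(2 * π * τ.im) * |y|) := by
        rw [gstar, norm_mul, norm_mul, norm_div, norm_e_neg_sq_mul_div_two, Complex.norm_ofNat,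
          Complex.norm_of_nonneg (erfc_nonneg _)]
    _ ≤ Real.exp (π * τ.im * y ^ 2) * 1 * Real.exp (-(2 * π * τ.im * y ^ 2)) := by
        gcongr
        · exact erfc_nonneg _
        · linarith [norm_ofReal_sign_le_one y]
    _ = Real.exp (-(π * τ.im * y ^ 2)) := by
        rw [mul_one, ← Real.exp_add]
        ring_nf

theorem gstar_isBigO_exp_neg_mul_abs (hτ : 0 ≤ τ.im) (δ : ℝ) :
    gstar τ =O[⊤] fun y => Real.exp (-(2 * (π * τ.im) * δ * |y|)) :=
  isBigO_top.2 ⟨Real.exp (π * τ.im * δ ^ 2), fun y => by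
    rw [Real.norm_eq_abs, Real.abs_exp]
    exact (norm_gstar_le hτ y).trans (exp_neg_mul_sq_le (by positivity) δ y)⟩

theorem gfun_isBigO_exp_neg_mul_abs (hτ : 0 < τ.im) (δ : ℝ) :
    gfun τ =O[𝓟 {y | HalfIntGap δ y}] fun y => Real.exp (-(2 * (π * τ.im) * δ * |y|)) :=
  (gplus_isBigO_exp_neg_mul_abs hτ δ).sub ((gstar_isBigO_exp_neg_mul_abs hτ.le δ).mono le_top)

theorem exists_summable_norm_gfun_le {N : ℤ} (hN : N ≠ 0) (hτ : 0 < τ.im) (hδ : 0 < δ)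
    {K : Set ℝ} (hK : Bornology.IsBounded K) (hgap : ∀ x ∈ K, HalfIntGap δ x) :
    ∃ u : ℤ → ℝ, Summable u ∧ ∀ n : ℤ, ∀ x ∈ K, ‖gfun τ ((N : ℝ) * n + x)‖ ≤ u n :=
  exists_summable_norm_le_of_isBigO_exp_neg_mul_abs (by positivity) (Int.cast_ne_zero.2 hN)
    (gfun_isBigO_exp_neg_mul_abs hτ δ) hK
    fun x hx n => by simpa only [mem_ofPred_eq, Int.cast_mul] using (hgap x hx).int_add (N * n)

end

theorem Gfun_convergence_general (N : ℤ) (hN : N ≠ 0) (τ : ℂ) (hτ : 0 < τ.im) :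
    (∀ x : ℝ, Summable (fun n : ℤ => ‖gfun τ ((N : ℝ) * n + x)‖)) ∧
    (∀ K : Set ℝ, IsCompact K → (∀ x ∈ K, ∀ m : ℤ, x ≠ (m : ℝ) + 1 / 2) →
      TendstoUniformlyOn (fun (s : Finset ℤ) (x : ℝ) => ∑ n ∈ s, gfun τ ((N : ℝ) * n + x))
        (fun x => ∑' n : ℤ, gfun τ ((N : ℝ) * n + x)) Filter.atTop K) := by
  constructor
  · intro x
    obtain ⟨δ, hδ, hx⟩ := exists_pos_halfIntGap x
    obtain ⟨u, hu, hle⟩ := exists_summable_norm_gfun_le hN hτ hδ (K := {x})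
      Bornology.isBounded_singleton (by rintro _ rfl; exact hx)
    exact hu.of_nonneg_of_le (fun _ => norm_nonneg _) fun n => hle n x rfl
  · intro K hK hne
    obtain ⟨δ, hδ, hgap⟩ := exists_pos_forall_halfIntGap hK hne
    obtain ⟨u, hu, hle⟩ := exists_summable_norm_gfun_le hN hτ hδ hK.isBounded hgap
    exact tendstoUniformlyOn_tsum hu hle

/-- absolute convergence of `G_τ(x) = ∑_{n ∈ ℤ} g_τ(Nn + x)`, uniformly on
compact subsets of `ℝ ∖ (ℤ+1/2)`. -/
theorem Gfun_convergence (N : ℕ) (hN : 0 < N) (hNe : Even N) (τ : ℂ) (hτ : 0 < τ.im) :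
    (∀ x : ℝ, Summable (fun n : ℤ => ‖gfun τ ((N : ℝ) * n + x)‖)) ∧
    (∀ K : Set ℝ, IsCompact K → (∀ x ∈ K, ∀ m : ℤ, x ≠ (m : ℝ) + 1/2) →
      TendstoUniformlyOn (fun (s : Finset ℤ) (x : ℝ) => ∑ n ∈ s, gfun τ ((N : ℝ) * n + x))
        (fun x => ∑' n : ℤ, gfun τ ((N : ℝ) * n + x)) Filter.atTop K) := by
  simpa only [Int.cast_natCast] using Gfun_convergence_general N (by positivity) τ hτ
end
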